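/- The group H = ⟨a, b, t ∣ t a t⁻¹ = ab, t b t⁻¹ = ba⟩ has a subgroup of finite index that is residually (finite 5), i.e. H is virtually a residually (finite 5)-group. -/

import Mathlib

/-- The defining relations of `H = ⟨a, b, t ∣ t a t⁻¹ = ab, t b t⁻¹ = ba⟩`, with generators
`0 ↦ a`, `1 ↦ b`, `2 ↦ t`. -/
def hGroupRels : Set (FreeGroup (Fin 3)) :=
  { FreeGroup.of 2 * FreeGroup.of 0 * (FreeGroup.of 2)⁻¹ *
      (FreeGroup.of 0 * FreeGroup.of 1)⁻¹,
    FreeGroup.of 2 * FreeGroup.of 1 * (FreeGroup.of 2)⁻¹ *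
      (FreeGroup.of 1 * FreeGroup.of 0)⁻¹ }

/-- The group `H = ⟨a, b, t ∣ t a t⁻¹ = ab, t b t⁻¹ = ba⟩`. -/
abbrev HGroup : Type := PresentedGroup hGroupRels

/-- A group `G` is residually (finite `p`) if every nontrivial element has a nontrivial
image under some homomorphism onto a finite `p`-group. -/
def ResiduallyFiniteP (p : ℕ) (G : Type*) [Group G] : Prop :=
  ∀ g : G, g ≠ 1 → ∃ (Q : Type) (_ : Group Q) (_ : Fintype Q) (f : G →* Q),
    Function.Surjective f ∧ IsPGroup p Q ∧ f g ≠ 1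


@[ext] structure TAlg (R : Type) [CommRing R] (x z : R) where
  c0 : R
  c1 : R
  c2 : R
  c3 : R

namespace TAlg
variable {R : Type} [CommRing R] {x z : R}

instance : Zero (TAlg R x z) := ⟨⟨0, 0, 0, 0⟩⟩
instance : One (TAlg R x z) := ⟨⟨1, 0, 0, 0⟩⟩
instance : Add (TAlg R x z) := ⟨fun u v => ⟨u.c0 + v.c0, u.c1 + v.c1, u.c2 + v.c2, u.c3 + v.c3⟩⟩
instance : Neg (TAlg R x z) := ⟨fun u => ⟨-u.c0, -u.c1, -u.c2, -u.c3⟩⟩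
instance : Mul (TAlg R x z) := ⟨fun u v =>
  ⟨u.c0 * v.c0 - u.c1 * v.c1 + (z - x ^ 2) * (u.c2 * v.c1) - u.c2 * v.c2 - x * (u.c2 * v.c3)
      - x * (u.c3 * v.c1) - u.c3 * v.c3,
   u.c0 * v.c1 + u.c1 * v.c0 + x * (u.c1 * v.c1) + x * (u.c2 * v.c1) + u.c2 * v.c3
      + z * (u.c3 * v.c1) - u.c3 * v.c2,
   u.c0 * v.c2 + u.c2 * v.c0 - u.c1 * v.c3 + x * (u.c2 * v.c1) + x * (u.c2 * v.c2)
      + z * (u.c2 * v.c3) + u.c3 * v.c1,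
   u.c0 * v.c3 + u.c3 * v.c0 + u.c1 * v.c2 + x * (u.c1 * v.c3) - u.c2 * v.c1
      + x * (u.c3 * v.c2) + z * (u.c3 * v.c3)⟩⟩

@[simp] lemma zero_c0 : (0 : TAlg R x z).c0 = 0 := rfl
@[simp] lemma zero_c1 : (0 : TAlg R x z).c1 = 0 := rfl
@[simp] lemma zero_c2 : (0 : TAlg R x z).c2 = 0 := rfl
@[simp] lemma zero_c3 : (0 : TAlg R x z).c3 = 0 := rfl
@[simp] lemma one_c0 : (1 : TAlg R x z).c0 = 1 := rfl
@[simp] lemma one_c1 : (1 : TAlg R x z).c1 = 0 := rfl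
@[simp] lemma one_c2 : (1 : TAlg R x z).c2 = 0 := rfl
@[simp] lemma one_c3 : (1 : TAlg R x z).c3 = 0 := rfl
@[simp] lemma add_c0 (u v : TAlg R x z) : (u + v).c0 = u.c0 + v.c0 := rfl
@[simp] lemma add_c1 (u v : TAlg R x z) : (u + v).c1 = u.c1 + v.c1 := rfl
@[simp] lemma add_c2 (u v : TAlg R x z) : (u + v).c2 = u.c2 + v.c2 := rfl
@[simp] lemma add_c3 (u v : TAlg R x z) : (u + v).c3 = u.c3 + v.c3 := rfl
@[simp] lemma neg_c0 (u : TAlg R x z) : (-u).c0 = -u.c0 := rfl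
@[simp] lemma neg_c1 (u : TAlg R x z) : (-u).c1 = -u.c1 := rfl
@[simp] lemma neg_c2 (u : TAlg R x z) : (-u).c2 = -u.c2 := rfl
@[simp] lemma neg_c3 (u : TAlg R x z) : (-u).c3 = -u.c3 := rfl
@[simp] lemma mul_c0 (u v : TAlg R x z) : (u * v).c0 =
  u.c0 * v.c0 - u.c1 * v.c1 + (z - x ^ 2) * (u.c2 * v.c1) - u.c2 * v.c2 - x * (u.c2 * v.c3)
      - x * (u.c3 * v.c1) - u.c3 * v.c3 := rfl
@[simp] lemma mul_c1 (u v : TAlg R x z) : (u * v).c1 =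
   u.c0 * v.c1 + u.c1 * v.c0 + x * (u.c1 * v.c1) + x * (u.c2 * v.c1) + u.c2 * v.c3
      + z * (u.c3 * v.c1) - u.c3 * v.c2 := rfl
@[simp] lemma mul_c2 (u v : TAlg R x z) : (u * v).c2 =
   u.c0 * v.c2 + u.c2 * v.c0 - u.c1 * v.c3 + x * (u.c2 * v.c1) + x * (u.c2 * v.c2)
      + z * (u.c2 * v.c3) + u.c3 * v.c1 := rfl
@[simp] lemma mul_c3 (u v : TAlg R x z) : (u * v).c3 =
   u.c0 * v.c3 + u.c3 * v.c0 + u.c1 * v.c2 + x * (u.c1 * v.c3) - u.c2 * v.c1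
      + x * (u.c3 * v.c2) + z * (u.c3 * v.c3) := rfl

instance : Ring (TAlg R x z) where
  add_assoc u v w := by ext <;> simp <;> ring
  zero_add u := by ext <;> simp
  add_zero u := by ext <;> simp
  add_comm u v := by ext <;> simp <;> ring
  neg_add_cancel u := by ext <;> simp
  mul_assoc u v w := by ext <;> simp <;> ring
  one_mul u := by ext <;> simp
  mul_one u := by ext <;> simp
  zero_mul u := by ext <;> simp
  mul_zero u := by ext <;> simp
  left_distrib u v w := by ext <;> simp <;> ring
  right_distrib u v w := by ext <;> simp <;> ring
  nsmul := nsmulRec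
  zsmul := zsmulRec

@[simp] lemma sub_c0 (u v : TAlg R x z) : (u - v).c0 = u.c0 - v.c0 := by simp [sub_eq_add_neg]
@[simp] lemma sub_c1 (u v : TAlg R x z) : (u - v).c1 = u.c1 - v.c1 := by simp [sub_eq_add_neg]
@[simp] lemma sub_c2 (u v : TAlg R x z) : (u - v).c2 = u.c2 - v.c2 := by simp [sub_eq_add_neg]
@[simp] lemma sub_c3 (u v : TAlg R x z) : (u - v).c3 = u.c3 - v.c3 := by simp [sub_eq_add_neg]

instance [Finite R] : Finite (TAlg R x z) :=
  Finite.of_injective (fun u : TAlg R x z => (u.c0, u.c1, u.c2, u.c3)) (by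
    intro u v h; simp only [Prod.mk.injEq] at h; ext <;> tauto)

/-- scalars -/
def sc (r : R) : TAlg R x z := ⟨r, 0, 0, 0⟩

/-- The unit `a`. -/
def ga (x z : R) : (TAlg R x z)ˣ :=
  ⟨⟨0, 1, 0, 0⟩, ⟨x, -1, 0, 0⟩, by ext <;> simp, by ext <;> simp⟩

/-- The unit `b`. -/
def gb (x z : R) : (TAlg R x z)ˣ :=
  ⟨⟨0, 0, 1, 0⟩, ⟨x, 0, -1, 0⟩, by ext <;> simp, by ext <;> simp⟩

/-- change of scalars -/
def mapHom {S : Type} [CommRing S] {x' z' : S} (f : R →+* S) (hx : f x = x') (hz : f z = z') :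
    TAlg R x z →+* TAlg S x' z' where
  toFun u := ⟨f u.c0, f u.c1, f u.c2, f u.c3⟩
  map_one' := by ext <;> simp
  map_zero' := by ext <;> simp
  map_add' u v := by ext <;> simp
  map_mul' u v := by subst hx hz; ext <;> simp

/-- the endomorphism `a ↦ ab`, `b ↦ ba`. -/
def phi (s : R →+* R) (hx : s x = z) (hz : s z = x ^ 2 * z - 2 * x ^ 2 + 2) :
    TAlg R x z →+* TAlg R x z where
  toFun u := ⟨s u.c0 + (z - x ^ 2) * s u.c2 + (1 - x ^ 2) * s u.c3,
    x * s u.c2 + x * (z - 1) * s u.c3, x * s u.c2 + x * s u.c3, s u.c1 - s u.c2⟩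
  map_one' := by ext <;> simp
  map_zero' := by ext <;> simp
  map_add' u v := by ext <;> simp <;> ring
  map_mul' u v := by ext <;> simp [hx, hz] <;> ring

lemma phi_ga (s : R →+* R) (hx : s x = z) (hz : s z = x ^ 2 * z - 2 * x ^ 2 + 2) :
    phi s hx hz (ga x z : TAlg R x z) = ga x z * gb x z := by
  ext <;> simp [phi, ga, gb]

lemma phi_gb (s : R →+* R) (hx : s x = z) (hz : s z = x ^ 2 * z - 2 * x ^ 2 + 2) :
    phi s hx hz (gb x z : TAlg R x z) = gb x z * ga x z := by
  ext <;> simp [phi, ga, gb]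

lemma phi_inj (s : R →+* R) (hx : s x = z) (hz : s z = x ^ 2 * z - 2 * x ^ 2 + 2)
    (ux : IsUnit x) (uz : IsUnit (z - 2)) (hs : Function.Injective s) :
    Function.Injective (phi s hx hz) := by
  rw [injective_iff_map_eq_zero]
  intro u hu
  have h0 := congrArg c0 hu
  have h1 := congrArg c1 hu
  have h2 := congrArg c2 hu
  have h3 := congrArg c3 hu
  simp only [phi, RingHom.coe_mk, MonoidHom.coe_mk, OneHom.coe_mk, zero_c0, zero_c1, zero_c2,
    zero_c3] at h0 h1 h2 h3
  have k3 : s u.c3 = 0 := by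
    rw [← (ux.mul uz).mul_right_eq_zero]
    linear_combination h1 - h2
  have k2 : s u.c2 = 0 := by
    rw [← ux.mul_right_eq_zero]
    linear_combination h2 - x * k3
  have k1 : s u.c1 = 0 := by linear_combination h3 + k2
  have k0 : s u.c0 = 0 := by linear_combination h0 - (z - x ^ 2) * k2 - (1 - x ^ 2) * k3
  ext
  · exact hs (by simpa using k0)
  · exact hs (by simpa using k1)
  · exact hs (by simpa using k2)
  · exact hs (by simpa using k3)

/-- specialization into integer matrices -/
def spec (f : R →+* ℤ) (hx : f x = 2) (hz : f z = 11) :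
    TAlg R x z →+* Matrix (Fin 2) (Fin 2) ℤ where
  toFun u := !![f u.c0 + f u.c1 + f u.c2 + 10 * f u.c3, 3 * f u.c1 + 3 * f u.c3;
    3 * f u.c2 + 3 * f u.c3, f u.c0 + f u.c1 + f u.c2 + f u.c3]
  map_one' := by ext i j; fin_cases i <;> fin_cases j <;> simp
  map_zero' := by ext i j; fin_cases i <;> fin_cases j <;> simp
  map_add' u v := by ext i j; fin_cases i <;> fin_cases j <;> simp <;> ring
  map_mul' u v := by
    ext i j; fin_cases i <;> fin_cases j <;> simp [Matrix.mul_apply, Fin.sum_univ_two, hx, hz] <;> ring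

end TAlg

/-- Sanov-type generators. -/
def sanA : Matrix.SpecialLinearGroup (Fin 2) ℤ := ⟨!![1, 3; 0, 1], by simp⟩

/-- Sanov-type generators. -/
def sanB : Matrix.SpecialLinearGroup (Fin 2) ℤ := ⟨!![1, 0; 3, 1], by simp⟩

/-- Sanov-type generators. -/
def sanov : Fin 2 → Matrix.SpecialLinearGroup (Fin 2) ℤ := ![sanA, sanB]

lemma sanA_coe : (sanA : Matrix (Fin 2) (Fin 2) ℤ) = !![1, 3; 0, 1] := rfl
lemma sanB_coe : (sanB : Matrix (Fin 2) (Fin 2) ℤ) = !![1, 0; 3, 1] := rfl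

def sanX : Fin 2 → Set (Matrix.SpecialLinearGroup (Fin 2) ℤ) :=
  ![{g | (g 1 0 < g 0 0 ∧ 0 ≤ g 1 0) ∨ (g 0 0 < g 1 0 ∧ g 1 0 ≤ 0)},
    {g | (g 0 0 < g 1 0 ∧ 0 ≤ g 0 0) ∨ (g 1 0 < g 0 0 ∧ g 0 0 ≤ 0)}]

def sanY : Fin 2 → Set (Matrix.SpecialLinearGroup (Fin 2) ℤ) :=
  ![{g | (g 1 0 < 0 ∧ -g 1 0 < g 0 0) ∨ (0 < g 1 0 ∧ g 0 0 < -g 1 0)},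
    {g | (g 0 0 < 0 ∧ -g 0 0 < g 1 0) ∨ (0 < g 0 0 ∧ g 1 0 < -g 0 0)}]

lemma san_ne (g : Matrix.SpecialLinearGroup (Fin 2) ℤ) : g 0 0 ≠ 0 ∨ g 1 0 ≠ 0 := by
  by_contra h
  push Not at h
  have := g.det_coe
  rw [Matrix.det_fin_two] at this
  simp [h.1, h.2] at this

lemma sanX0 (g : Matrix.SpecialLinearGroup (Fin 2) ℤ) : g ∈ sanX 0 ↔
    (g 1 0 < g 0 0 ∧ 0 ≤ g 1 0) ∨ (g 0 0 < g 1 0 ∧ g 1 0 ≤ 0) := Iff.rfl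

lemma sanX1 (g : Matrix.SpecialLinearGroup (Fin 2) ℤ) : g ∈ sanX 1 ↔
    (g 0 0 < g 1 0 ∧ 0 ≤ g 0 0) ∨ (g 1 0 < g 0 0 ∧ g 0 0 ≤ 0) := Iff.rfl

lemma sanY0 (g : Matrix.SpecialLinearGroup (Fin 2) ℤ) : g ∈ sanY 0 ↔
    (g 1 0 < 0 ∧ -g 1 0 < g 0 0) ∨ (0 < g 1 0 ∧ g 0 0 < -g 1 0) := Iff.rfl

lemma sanY1 (g : Matrix.SpecialLinearGroup (Fin 2) ℤ) : g ∈ sanY 1 ↔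
    (g 0 0 < 0 ∧ -g 0 0 < g 1 0) ∨ (0 < g 0 0 ∧ g 1 0 < -g 0 0) := Iff.rfl

lemma sanov_mul (g : Matrix.SpecialLinearGroup (Fin 2) ℤ) :
    (sanov 0 * g) 0 0 = g 0 0 + 3 * g 1 0 ∧ (sanov 0 * g) 1 0 = g 1 0 ∧
    (sanov 1 * g) 0 0 = g 0 0 ∧ (sanov 1 * g) 1 0 = 3 * g 0 0 + g 1 0 := by
  simp [sanov, Matrix.SpecialLinearGroup.coe_mul, Matrix.mul_apply, Fin.sum_univ_two, sanA_coe,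
    sanB_coe]

lemma sanov_inv_mul (g : Matrix.SpecialLinearGroup (Fin 2) ℤ) :
    ((sanov 0)⁻¹ * g) 0 0 = g 0 0 - 3 * g 1 0 ∧ ((sanov 0)⁻¹ * g) 1 0 = g 1 0 ∧
    ((sanov 1)⁻¹ * g) 0 0 = g 0 0 ∧ ((sanov 1)⁻¹ * g) 1 0 = - 3 * g 0 0 + g 1 0 := by
  have h := sanov_mul ((sanov 0)⁻¹ * g)
  have h' := sanov_mul ((sanov 1)⁻¹ * g)
  simp only [mul_inv_cancel_left] at h h'
  omega

lemma sanov_injective : Function.Injective (FreeGroup.lift sanov) := by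
  apply FreeGroup.injective_lift_of_ping_pong sanov sanX sanY
  · intro i
    fin_cases i
    · exact ⟨1, by simp [sanX]⟩
    · refine ⟨sanB, (sanX1 _).mpr ?_⟩
      simp [sanB_coe]
  · intro i j hij
    rw [Function.onFun, Set.disjoint_left]
    intro g
    fin_cases i <;> fin_cases j <;> simp [sanX] at hij ⊢ <;> omega
  · intro i j hij
    rw [Function.onFun, Set.disjoint_left]
    intro g
    fin_cases i <;> fin_cases j <;> simp [sanY] at hij ⊢ <;> omega
  · intro i j
    rw [Set.disjoint_left]
    intro g
    fin_cases i <;> fin_cases j <;> simp [sanX, sanY] <;> omega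
  · rw [Fin.forall_fin_two]
    constructor
    · rintro _ ⟨g, hg, rfl⟩
      have h1 := san_ne g
      obtain ⟨e1, e2, -, -⟩ := sanov_mul g
      rw [Set.mem_compl_iff, sanY0] at hg
      refine (sanX0 (sanov 0 * g)).mpr ?_
      rw [e1, e2]
      omega
    · rintro _ ⟨g, hg, rfl⟩
      have h1 := san_ne g
      obtain ⟨-, -, e1, e2⟩ := sanov_mul g
      rw [Set.mem_compl_iff, sanY1] at hg
      refine (sanX1 (sanov 1 * g)).mpr ?_
      rw [e1, e2]
      omega
  · rw [Fin.forall_fin_two]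
    constructor
    · rintro _ ⟨g, hg, rfl⟩
      have h1 := san_ne g
      obtain ⟨e1, e2, -, -⟩ := sanov_inv_mul g
      rw [Set.mem_compl_iff, sanX0] at hg
      refine (sanY0 ((sanov 0)⁻¹ * g)).mpr ?_
      rw [e1, e2]
      omega
    · rintro _ ⟨g, hg, rfl⟩
      have h1 := san_ne g
      obtain ⟨-, -, e1, e2⟩ := sanov_inv_mul g
      rw [Set.mem_compl_iff, sanX1] at hg
      refine (sanY1 ((sanov 1)⁻¹ * g)).mpr ?_
      rw [e1, e2]
      omega

/-- A unipotent element over a `5`-nilpotent ring has `5`-power order. -/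
lemma unip_five {E : Type*} [Ring E] (n : E) (m : ℕ) (hn : n ^ m = 0) (h5 : (5 : E) ^ m = 0) :
    ∃ K : ℕ, (1 + n) ^ 5 ^ K = 1 := by
  have step : ∀ j : ℕ, ∃ K : ℕ, ∃ r : E, (1 + n) ^ 5 ^ K = 1 + (5 : E) ^ (j + 1) * r := by
    intro j
    induction j with
    | zero =>
      obtain ⟨r, hr⟩ := (Commute.one_left n).exists_add_pow_prime_pow_eq (p := 5) (by norm_num) m
      refine ⟨m, n * r, ?_⟩
      have : n ^ 5 ^ m = 0 := by
        apply pow_eq_zero_of_le _ hn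
        exact (Nat.lt_pow_self (by norm_num)).le
      rw [hr, this]
      simp [mul_assoc]
    | succ j ih =>
      obtain ⟨K, r, hr⟩ := ih
      obtain ⟨q, hq⟩ := (Commute.one_left ((5 : E) ^ (j + 1) * r)).exists_add_pow_prime_pow_eq
        (p := 5) (by norm_num) 1
      have hc : Commute (5 : E) r := by
        have := Nat.cast_commute 5 r
        exact_mod_cast this
      have hc1 : Commute ((5 : E) ^ (j + 1)) r := hc.pow_left _
      refine ⟨K + 1, (5 : E) ^ (4 * j + 3) * r ^ 5 + r * q, ?_⟩
      rw [pow_succ, pow_mul, hr]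
      rw [pow_one] at hq
      rw [hq, hc1.mul_pow, ← pow_mul, mul_add, ← mul_assoc (5 ^ (j + 1 + 1)) (5 ^ _) (r ^ 5), ← pow_add, one_pow,
        add_assoc]
      congr 2
      · congr 2
        ring
      · push_cast
        rw [mul_one, pow_succ' (5 : E) (j + 1)]
        simp only [mul_assoc]
  obtain ⟨K, r, hr⟩ := step m
  exact ⟨K, by rw [hr, pow_succ, h5]; simp⟩

noncomputable section

/-- The coefficient ring `ℤ[x, z]`. -/
abbrev RR : Type := MvPolynomial (Fin 2) ℤ

/-- The residue map. -/
def resid : RR →+* ZMod 5 := MvPolynomial.eval₂Hom (Int.castRingHom _) (fun _ => 1)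

abbrev II : Ideal RR := RingHom.ker resid

def sig : RR →+* RR := (MvPolynomial.aeval ![MvPolynomial.X 1,
  MvPolynomial.X 0 ^ 2 * MvPolynomial.X 1 - 2 * MvPolynomial.X 0 ^ 2 + 2] : RR →ₐ[ℤ] RR).toRingHom

lemma sig_x : sig (MvPolynomial.X 0) = MvPolynomial.X 1 := by simp [sig]
lemma sig_z : sig (MvPolynomial.X 1) =
  MvPolynomial.X 0 ^ 2 * MvPolynomial.X 1 - 2 * MvPolynomial.X 0 ^ 2 + 2 := by simp [sig]

lemma resid_sig : resid.comp sig = resid := by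
  apply MvPolynomial.ringHom_ext
  · intro r; simp
  · intro i
    fin_cases i
    · simp [sig_x, resid]
    · simp [sig_z, resid]

lemma II_le : II ≤ II.comap sig := by
  intro r hr
  rw [Ideal.mem_comap, RingHom.mem_ker, ← RingHom.comp_apply, resid_sig]
  exact hr

lemma IIpow_le (k : ℕ) : II ^ k ≤ (II ^ k).comap sig :=
  (Ideal.pow_right_mono II_le k).trans (Ideal.le_comap_pow sig k)

instance : Fact (Nat.Prime 5) := ⟨by norm_num⟩

lemma II_ne_top : II ≠ ⊤ := RingHom.ker_ne_top _

abbrev RK (k : ℕ) : Type := RR ⧸ II ^ k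

instance : Finite (RR ⧸ II) :=
  Finite.of_injective _ (RingHom.kerLift_injective resid)

instance (k : ℕ) : Finite (RK k) :=
  Ideal.finite_quotient_pow (IsNoetherian.noetherian _) k

def xk (k : ℕ) : RK k := Ideal.Quotient.mk _ (MvPolynomial.X 0)
def zk (k : ℕ) : RK k := Ideal.Quotient.mk _ (MvPolynomial.X 1)

def sigk (k : ℕ) : RK k →+* RK k := Ideal.quotientMap _ sig (IIpow_le k)

lemma sigk_x (k : ℕ) : sigk k (xk k) = zk k := by
  simp [sigk, xk, zk, sig_x]

lemma sigk_z (k : ℕ) : sigk k (zk k) = xk k ^ 2 * zk k - 2 * xk k ^ 2 + 2 := by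
  simp [sigk, xk, zk, sig_z, map_ofNat]
  

lemma RK_nilp (k : ℕ) (r : RR) (hr : r ∈ II) : (Ideal.Quotient.mk (II ^ k) r) ^ k = 0 := by
  rw [← map_pow, Ideal.Quotient.eq_zero_iff_mem]
  exact Ideal.pow_mem_pow hr k

lemma five_mem : (5 : RR) ∈ II := by
  rw [RingHom.mem_ker, map_ofNat]; rfl

lemma five_pow (k : ℕ) : (5 : RK k) ^ k = 0 := by
  have := RK_nilp k 5 five_mem
  rwa [map_ofNat] at this

lemma RK_unip (k : ℕ) (r : RR) (hr : resid r = 1) :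
    ∃ K, (Ideal.Quotient.mk (II ^ k) r) ^ 5 ^ K = 1 := by
  have h := unip_five (Ideal.Quotient.mk (II ^ k) (r - 1)) k
    (RK_nilp k _ (by simp [RingHom.mem_ker, hr])) (five_pow k)
  simpa using h

lemma xk_unip (k : ℕ) : ∃ K, xk k ^ 5 ^ K = 1 := RK_unip k _ (by simp [resid])

lemma zk_unip (k : ℕ) : ∃ K, (2 - zk k) ^ 5 ^ K = 1 := by
  obtain ⟨K, h⟩ := RK_unip k (2 - MvPolynomial.X 1) (by simp [resid]; norm_num)
  exact ⟨K, by rwa [map_sub, map_ofNat] at h⟩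

lemma xk_unit (k : ℕ) : IsUnit (xk k) := by
  obtain ⟨K, h⟩ := xk_unip k
  exact IsUnit.of_pow_eq_one h (by positivity)

lemma zk_unit (k : ℕ) : IsUnit (zk k - 2) := by
  obtain ⟨K, h⟩ := zk_unip k
  rw [← IsUnit.neg_iff, neg_sub]
  exact IsUnit.of_pow_eq_one h (by positivity)

lemma sigk_surj (k : ℕ) : Function.Surjective (sigk k) := by
  rw [← RingHom.range_eq_top]
  set S := (sigk k).range with hS
  have hz : zk k ∈ S := ⟨xk k, sigk_x k⟩
  have hw : xk k ^ 2 * zk k - 2 * xk k ^ 2 + 2 ∈ S := ⟨zk k, sigk_z k⟩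
  have h2 : (2 : RK k) ∈ S := ofNat_mem S 2
  have hx2 : xk k ^ 2 ∈ S := by
    obtain ⟨K, h⟩ := zk_unip k
    have e : xk k ^ 2 = (2 - (xk k ^ 2 * zk k - 2 * xk k ^ 2 + 2)) * (2 - zk k) ^ (5 ^ K - 1) := by
      have h' : (2 - zk k) * (2 - zk k) ^ (5 ^ K - 1) = 1 := by
        rw [← pow_succ', Nat.sub_add_cancel (Nat.one_le_pow _ _ (by norm_num)), h]
      linear_combination -(xk k ^ 2) * h'
    rw [e]
    exact mul_mem (sub_mem h2 hw) (pow_mem (sub_mem h2 hz) _)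
  have hx : xk k ∈ S := by
    obtain ⟨K, h⟩ := xk_unip k
    have ho : Odd (5 ^ K) := Odd.pow (by decide)
    obtain ⟨m, hm⟩ := ho
    have e : xk k = (xk k ^ 2) ^ (m + 1) := by
      rw [← pow_mul, show 2 * (m + 1) = 5 ^ K + 1 by omega, pow_succ, h, one_mul]
    rw [e]
    exact pow_mem hx2 _
  rw [eq_top_iff]
  rintro r -
  obtain ⟨r, rfl⟩ := Ideal.Quotient.mk_surjective r
  induction r using MvPolynomial.induction_on with
  | C n => simp
  | add p q hp hq => rw [map_add]; exact add_mem hp hq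
  | mul_X p i hp =>
    rw [map_mul]
    refine mul_mem hp ?_
    fin_cases i
    · exact hx
    · exact hz

lemma sigk_inj (k : ℕ) : Function.Injective (sigk k) :=
  Finite.injective_iff_surjective.mpr (sigk_surj k)

lemma RR_sep (r : RR) (hr : r ≠ 0) : ∃ k, 2 ≤ k ∧ r ∉ II ^ k := by
  by_contra h
  push Not at h
  apply hr
  have := Ideal.iInf_pow_eq_bot_of_isDomain II II_ne_top
  rw [← Ideal.mem_bot, ← this, Ideal.mem_iInf]
  intro k
  exact Ideal.pow_le_pow_right (by omega) (h (k + 2) (by omega))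

end

namespace TAlg
variable {R : Type} [CommRing R] {x z : R}

/-- scalars as a ring homomorphism -/
def scHom : R →+* TAlg R x z where
  toFun := sc
  map_one' := by ext <;> simp [sc]
  map_zero' := by ext <;> simp [sc]
  map_add' u v := by ext <;> simp [sc]
  map_mul' u v := by ext <;> simp [sc]

lemma decomp (v : TAlg R x z) : v = scHom v.c0 + scHom v.c1 * (ga x z : TAlg R x z) +
    scHom v.c2 * (gb x z : TAlg R x z) + scHom v.c3 * ((ga x z * gb x z : (TAlg R x z)ˣ) : TAlg R x z) := by
  ext <;> simp [scHom, sc, ga, gb]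

/-- The `I`-adic filtration. -/
def Fil (I : Ideal R) (j : ℕ) (v : TAlg R x z) : Prop :=
  v.c0 ∈ I ^ j ∧ v.c1 ∈ I ^ j ∧ v.c2 ∈ I ^ j ∧ v.c3 ∈ I ^ j

variable {I : Ideal R}

lemma Fil.mono {i j : ℕ} (h : i ≤ j) {v : TAlg R x z} (hv : Fil I j v) : Fil I i v :=
  ⟨Ideal.pow_le_pow_right h hv.1, Ideal.pow_le_pow_right h hv.2.1,
    Ideal.pow_le_pow_right h hv.2.2.1, Ideal.pow_le_pow_right h hv.2.2.2⟩

lemma Fil.zero' (v : TAlg R x z) : Fil I 0 v := by simp [Fil]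

lemma Fil.add {j : ℕ} {u v : TAlg R x z} (hu : Fil I j u) (hv : Fil I j v) : Fil I j (u + v) :=
  ⟨add_mem hu.1 hv.1, add_mem hu.2.1 hv.2.1, add_mem hu.2.2.1 hv.2.2.1, add_mem hu.2.2.2 hv.2.2.2⟩

lemma Fil.mul {i j : ℕ} {u v : TAlg R x z} (hu : Fil I i u) (hv : Fil I j v) :
    Fil I (i + j) (u * v) := by
  have p : ∀ {r s : R}, r ∈ I ^ i → s ∈ I ^ j → r * s ∈ I ^ (i + j) := by
    intro r s hr hs
    rw [pow_add]
    exact Ideal.mul_mem_mul hr hs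
  have q : ∀ (t : R) {r s : R}, r ∈ I ^ i → s ∈ I ^ j → t * (r * s) ∈ I ^ (i + j) :=
    fun t r s hr hs => Ideal.mul_mem_left _ _ (p hr hs)
  obtain ⟨h0, h1, h2, h3⟩ := hu
  obtain ⟨k0, k1, k2, k3⟩ := hv
  refine ⟨?_, ?_, ?_, ?_⟩
  · rw [mul_c0]
    exact sub_mem (sub_mem (sub_mem (sub_mem (add_mem (sub_mem (p h0 k0) (p h1 k1)) (q _ h2 k1))
      (p h2 k2)) (q _ h2 k3)) (q _ h3 k1)) (p h3 k3)
  · rw [mul_c1]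
    exact sub_mem (add_mem (add_mem (add_mem (add_mem (add_mem (p h0 k1) (p h1 k0)) (q _ h1 k1))
      (q _ h2 k1)) (p h2 k3)) (q _ h3 k1)) (p h3 k2)
  · rw [mul_c2]
    exact add_mem (add_mem (add_mem (add_mem (sub_mem (add_mem (p h0 k2) (p h2 k0)) (p h1 k3))
      (q _ h2 k1)) (q _ h2 k2)) (q _ h2 k3)) (p h3 k1)
  · rw [mul_c3]
    exact add_mem (add_mem (sub_mem (add_mem (add_mem (add_mem (p h0 k3) (p h3 k0)) (p h1 k2))
      (q _ h1 k3)) (p h2 k1)) (q _ h3 k2)) (q _ h3 k3)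

lemma Fil.sc {j : ℕ} {r : R} (hr : r ∈ I ^ j) : Fil I j (scHom r : TAlg R x z) :=
  ⟨hr, zero_mem _, zero_mem _, zero_mem _⟩

lemma Fil.mulr {i : ℕ} {u : TAlg R x z} (hu : Fil I i u) (v : TAlg R x z) : Fil I i (u * v) :=
  hu.mul (Fil.zero' v)

lemma Fil.mull {i : ℕ} {u : TAlg R x z} (v : TAlg R x z) (hu : Fil I i u) : Fil I i (v * u) := by
  simpa using (Fil.zero' (I := I) v).mul hu

lemma fil_scal (θ : TAlg R x z →+* TAlg R x z) (hθ : ∀ v, Fil I 2 (θ v - v)) (j : ℕ) :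
    ∀ r ∈ I ^ j, Fil I (j + 1) (θ (scHom r) - scHom r) := by
  induction j with
  | zero => intro r _; exact (hθ _).mono (by omega)
  | succ j ih =>
    intro r hr
    rw [pow_succ] at hr
    refine Submodule.mul_induction_on hr ?_ ?_
    · intro s hs t ht
      have e : θ (scHom (s * t)) - scHom (s * t) =
        (θ (scHom s) - scHom s) * θ (scHom t) + scHom s * (θ (scHom t) - scHom t) := by
        rw [map_mul, map_mul]; noncomm_ring
      have ht1 : Fil I 1 (scHom t : TAlg R x z) := Fil.sc (by simpa using ht)
      have ht2 : Fil I 1 (θ (scHom t)) := by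
        have := ((hθ (scHom t)).mono (show 1 ≤ 2 by omega)).add ht1
        simpa using this
      rw [e]
      exact ((ih s hs).mul ht2).add ((Fil.sc hs).mul (hθ _))
    · intro s t hs ht
      have := hs.add ht
      rw [map_add, map_add]
      convert this using 1
      abel

lemma fil_theta (θ : TAlg R x z →+* TAlg R x z) (hθ : ∀ v, Fil I 2 (θ v - v)) (j : ℕ)
    (v : TAlg R x z) (hv : Fil I j v) : Fil I (j + 1) (θ v - v) := by
  obtain ⟨h0, h1, h2, h3⟩ := hv
  have key : ∀ r ∈ I ^ j, ∀ w : TAlg R x z, Fil I (j + 1) (θ (scHom r * w) - scHom r * w) := by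
    intro r hr w
    have e : θ (scHom r * w) - scHom r * w =
        (θ (scHom r) - scHom r) * θ w + scHom r * (θ w - w) := by
      rw [map_mul]; noncomm_ring
    rw [e]
    exact ((fil_scal θ hθ j r hr).mulr _).add (((Fil.sc hr).mul (hθ w)).mono (by omega))
  have := (((key _ h0 1).add (key _ h1 (ga x z))).add (key _ h2 (gb x z))).add
    (key _ h3 ((ga x z * gb x z : (TAlg R x z)ˣ)))
  convert this using 1
  conv_lhs => rw [decomp v]
  simp only [map_add, mul_one]
  abel

lemma Fil.eq_zero {k : ℕ} (hI : I ^ k = ⊥) {v : TAlg R x z} (hv : Fil I k v) : v = 0 := by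
  simp only [Fil, hI, Ideal.mem_bot] at hv
  ext <;> simp [hv]

end TAlg

/-- ring automorphisms act on units -/
def unitsAct (V : Type) [Ring V] : RingAut V →* MulAut Vˣ where
  toFun θ := Units.mapEquiv θ.toMulEquiv
  map_one' := by ext; rfl
  map_mul' f g := by ext; rfl

/-- The holomorph-like group. -/
abbrev Hol (V : Type) [Ring V] : Type := Vˣ ⋊[unitsAct V] RingAut V

lemma unitsAct_coe {V : Type} [Ring V] (θ : RingAut V) (u : Vˣ) :
    ((unitsAct V θ u : Vˣ) : V) = θ u := rfl

/-- The action of the holomorph. -/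
def holAct (V : Type) [Ring V] : Hol V →* AddMonoid.End V where
  toFun q := (AddMonoidHom.mulLeft (q.left : V)).comp (q.right.toRingHom.toAddMonoidHom)
  map_one' := by
    ext1 v
    change ((1 : Vˣ) : V) * v = v
    simp
  map_mul' p q := by
    ext1 v
    change (p.left : V) * p.right (q.left : V) * p.right (q.right v) =
      p.left * p.right (q.left * q.right v)
    rw [map_mul, mul_assoc]

lemma holAct_apply {V : Type} [Ring V] (q : Hol V) (v : V) : holAct V q v = q.left * q.right v := rfl

lemma holAct_one {V : Type} [Ring V] (q : Hol V) (h : holAct V q = 1) : q = 1 := by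
  have h1 : (q.left : V) = 1 := by
    have := congrArg (fun f : AddMonoid.End V => f 1) h
    simpa [holAct_apply] using this
  have h2 : ∀ v, q.right v = v := by
    intro v
    have := congrArg (fun f : AddMonoid.End V => f v) h
    simpa [holAct_apply, h1] using this
  refine SemidirectProduct.ext (Units.ext h1) ?_
  ext v
  exact h2 v

instance {V : Type} [Ring V] [Finite V] : Finite (RingAut V) :=
  Finite.of_injective (fun (θ : RingAut V) (v : V) => θ v) (by
    intro f g h
    ext v
    exact congrFun h v)

instance {V : Type} [Ring V] [Finite V] : Finite (Hol V) :=
  Finite.of_equiv _ SemidirectProduct.equivProd.symm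

namespace TAlg

lemma hol_five {R : Type} [CommRing R] {x z : R} {I : Ideal R} {k : ℕ} (hI : I ^ k = ⊥)
    (h5 : (5 : R) ^ k = 0) (q : Hol (TAlg R x z)) (hu : Fil I 2 ((q.left : TAlg R x z) - 1))
    (hθ : ∀ v, Fil I 2 (q.right v - v)) : ∃ K, q ^ 5 ^ K = 1 := by
  set n : AddMonoid.End (TAlg R x z) := holAct _ q - 1 with hn
  have step : ∀ j v, Fil I j v → Fil I (j + 1) (n v) := by
    intro j v hv
    have h1 := fil_theta (q.right : TAlg R x z ≃+* TAlg R x z).toRingHom hθ j v hv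
    have h2 : Fil I (j + 1) (((q.left : TAlg R x z) - 1) * q.right v) := by
      have h3 : Fil I j (q.right v) := by
        have := (h1.mono (Nat.le_succ j)).add hv
        simpa using this
      exact (hu.mul h3).mono (by omega)
    have e : n v = ((q.left : TAlg R x z) - 1) * q.right v + (q.right v - v) := by
      change (q.left : TAlg R x z) * q.right v - v = _
      noncomm_ring
    rw [e]
    exact h2.add h1
  have pw : ∀ j v, Fil I j ((n ^ j) v) := by
    intro j
    induction j with
    | zero => intro v; exact Fil.zero' _
    | succ j ih =>
      intro v
      rw [pow_succ']
      exact step j _ (ih v)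
  have hnk : n ^ k = 0 := by
    ext1 v
    exact Fil.eq_zero hI (pw k v)
  have h5V : (5 : TAlg R x z) ^ k = 0 := by
    have := congrArg (scHom (x := x) (z := z)) h5
    simpa only [map_pow, map_ofNat, map_zero] using this
  have h5k : (5 : AddMonoid.End (TAlg R x z)) ^ k = 0 := by
    ext1 v
    have e : (5 : AddMonoid.End (TAlg R x z)) ^ k = ((5 ^ k : ℕ) : AddMonoid.End (TAlg R x z)) := by
      push_cast; rfl
    rw [e, AddMonoid.End.natCast_apply, nsmul_eq_mul]
    push_cast
    rw [h5V, zero_mul]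
    rfl
  obtain ⟨K, hK⟩ := unip_five n k hnk h5k
  refine ⟨K, holAct_one _ ?_⟩
  rw [map_pow, ← hK, hn]
  congr 1
  abel

end TAlg

noncomputable section

abbrev VK (k : ℕ) : Type := TAlg (RK k) (xk k) (zk k)

def PhiK (k : ℕ) : RingAut (VK k) :=
  RingEquiv.ofBijective (TAlg.phi (sigk k) (sigk_x k) (sigk_z k))
    (Finite.injective_iff_bijective.mp
      (TAlg.phi_inj _ (sigk_x k) (sigk_z k) (xk_unit k) (zk_unit k) (sigk_inj k)))

/-- images of the generators -/
def rhoGen (k : ℕ) : Fin 3 → Hol (VK k) :=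
  ![SemidirectProduct.inl (TAlg.ga _ _), SemidirectProduct.inl (TAlg.gb _ _),
    SemidirectProduct.inr (PhiK k)]

lemma rho_rel (k : ℕ) : ∀ r ∈ hGroupRels, FreeGroup.lift (rhoGen k) r = 1 := by
  intro r hr
  rcases hr with rfl | rfl
  · simp only [map_mul, map_inv, FreeGroup.lift_apply_of, mul_inv_eq_one, rhoGen,
      Matrix.cons_val]
    rw [← map_inv, ← SemidirectProduct.inl_aut, ← map_mul]
    congr 1
    exact Units.ext (TAlg.phi_ga (sigk k) (sigk_x k) (sigk_z k))
  · simp only [map_mul, map_inv, FreeGroup.lift_apply_of, mul_inv_eq_one, rhoGen,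
      Matrix.cons_val]
    rw [← map_inv, ← SemidirectProduct.inl_aut, ← map_mul]
    congr 1
    exact Units.ext (TAlg.phi_gb (sigk k) (sigk_x k) (sigk_z k))

def rho (k : ℕ) : HGroup →* Hol (VK k) := PresentedGroup.toGroup (rho_rel k)

lemma rho_of (k : ℕ) (i : Fin 3) : rho k (PresentedGroup.of i) = rhoGen k i :=
  PresentedGroup.toGroup.of _

/-- projection between levels -/
def prR (k : ℕ) (hk : 2 ≤ k) : RK k →+* RK 2 := Ideal.Quotient.factor (Ideal.pow_le_pow_right hk)

def prV (k : ℕ) (hk : 2 ≤ k) : VK k →+* VK 2 := TAlg.mapHom (prR k hk) rfl rfl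

lemma prR_sig (k : ℕ) (hk : 2 ≤ k) (r : RK k) : prR k hk (sigk k r) = sigk 2 (prR k hk r) := by
  obtain ⟨r, rfl⟩ := Ideal.Quotient.mk_surjective r
  rfl

lemma prR_x (k : ℕ) (hk : 2 ≤ k) : prR k hk (xk k) = xk 2 := rfl
lemma prR_z (k : ℕ) (hk : 2 ≤ k) : prR k hk (zk k) = zk 2 := rfl

lemma prV_phi (k : ℕ) (hk : 2 ≤ k) (v : VK k) : prV k hk (PhiK k v) = PhiK 2 (prV k hk v) := by
  change prV k hk (TAlg.phi _ (sigk_x k) (sigk_z k) v) = TAlg.phi _ (sigk_x 2) (sigk_z 2) (prV k hk v)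
  ext <;> simp [prV, TAlg.mapHom, TAlg.phi, prR_sig, prR_x, prR_z]

lemma rho_compat (k : ℕ) (hk : 2 ≤ k) (h : HGroup) :
    prV k hk ((rho k h).left : VK k) = ((rho 2 h).left : VK 2) ∧
    ∀ v, prV k hk ((rho k h).right v) = (rho 2 h).right (prV k hk v) := by
  let S : Subgroup HGroup :=
    { carrier := {h | prV k hk ((rho k h).left : VK k) = ((rho 2 h).left : VK 2) ∧
        ∀ v, prV k hk ((rho k h).right v) = (rho 2 h).right (prV k hk v)}
      one_mem' := by simp
      mul_mem' := by
        rintro g h ⟨g1, g2⟩ ⟨h1, h2⟩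
        refine ⟨?_, ?_⟩
        · simp [unitsAct_coe, g1, g2, h1]
        · intro v
          simp [g2, h2]
      inv_mem' := by
        rintro g ⟨g1, g2⟩
        have k2 : ∀ v, prV k hk ((rho k g).right⁻¹ v) = (rho 2 g).right⁻¹ (prV k hk v) := by
          intro v
          have := g2 ((rho k g).right⁻¹ v)
          rw [← RingAut.mul_apply, mul_inv_cancel, RingAut.one_apply] at this
          rw [this, ← RingAut.mul_apply, inv_mul_cancel, RingAut.one_apply]
        refine ⟨?_, ?_⟩
        · have : Units.map (prV k hk : VK k →* VK 2) (rho k g).left = (rho 2 g).left := Units.ext g1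
          rw [map_inv, map_inv, SemidirectProduct.inv_left, SemidirectProduct.inv_left,
            unitsAct_coe, unitsAct_coe, k2, ← this, ← map_inv]
          rfl
        · intro v
          rw [map_inv, map_inv, SemidirectProduct.inv_right, SemidirectProduct.inv_right]
          exact k2 v }
  have : h ∈ S := by
    apply PresentedGroup.generated_by
    intro j
    change _ ∧ _
    rw [rho_of, rho_of]
    fin_cases j
    · refine ⟨?_, fun v => rfl⟩
      ext <;> simp [rhoGen, TAlg.ga, prV, TAlg.mapHom]
    · refine ⟨?_, fun v => rfl⟩
      ext <;> simp [rhoGen, TAlg.gb, prV, TAlg.mapHom]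
    · refine ⟨?_, fun v => prV_phi k hk v⟩
      simp [rhoGen]
  exact this

/-- The ideal at level `k`. -/
abbrev IK (k : ℕ) : Ideal (RK k) := II.map (Ideal.Quotient.mk (II ^ k))

lemma IK_pow (k : ℕ) : IK k ^ k = ⊥ := by
  rw [← Ideal.map_pow, Ideal.map_quotient_self]

lemma prR_ker (k : ℕ) (hk : 2 ≤ k) (r : RK k) (hr : prR k hk r = 0) : r ∈ IK k ^ 2 := by
  rw [← Ideal.map_pow, ← Ideal.Quotient.factor_ker (Ideal.pow_le_pow_right hk)]
  exact hr

lemma prV_ker (k : ℕ) (hk : 2 ≤ k) (v : VK k) (hv : prV k hk v = 0) : TAlg.Fil (IK k) 2 v :=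
  ⟨prR_ker k hk _ (congrArg TAlg.c0 hv), prR_ker k hk _ (congrArg TAlg.c1 hv),
    prR_ker k hk _ (congrArg TAlg.c2 hv), prR_ker k hk _ (congrArg TAlg.c3 hv)⟩

lemma rho_five (k : ℕ) (hk : 2 ≤ k) (h : HGroup) (hh : rho 2 h = 1) :
    ∃ K, (rho k h) ^ 5 ^ K = 1 := by
  obtain ⟨h1, h2⟩ := rho_compat k hk h
  rw [hh] at h1 h2
  apply TAlg.hol_five (IK_pow k) (five_pow k)
  · apply prV_ker k hk
    rw [map_sub, h1]; simp
  · intro v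
    apply prV_ker k hk
    rw [map_sub, h2]; simp

/-! ### The structure of `HGroup` -/

/-- The inclusion of the free group. -/
def iot : FreeGroup (Fin 2) →* HGroup :=
  FreeGroup.lift ![PresentedGroup.of 0, PresentedGroup.of 1]

/-- The endomorphism. -/
def endo : FreeGroup (Fin 2) →* FreeGroup (Fin 2) :=
  FreeGroup.lift ![FreeGroup.of 0 * FreeGroup.of 1, FreeGroup.of 1 * FreeGroup.of 0]

/-- The stable letter. -/
def tt : HGroup := PresentedGroup.of 2

lemma rel_a : tt * PresentedGroup.of 0 * tt⁻¹ =
    (PresentedGroup.of 0 * PresentedGroup.of 1 : HGroup) :=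
  PresentedGroup.mk_eq_mk_of_mul_inv_mem (Or.inl rfl)

lemma rel_b : tt * PresentedGroup.of 1 * tt⁻¹ =
    (PresentedGroup.of 1 * PresentedGroup.of 0 : HGroup) :=
  PresentedGroup.mk_eq_mk_of_mul_inv_mem (Or.inr rfl)

lemma conj_iot (w : FreeGroup (Fin 2)) : tt * iot w * tt⁻¹ = iot (endo w) := by
  have : (MulAut.conj tt).toMonoidHom.comp iot = iot.comp endo := by
    apply FreeGroup.ext_hom
    intro i
    fin_cases i
    · simpa [iot, endo] using rel_a
    · simpa [iot, endo] using rel_b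
  exact DFunLike.congr_fun this w

lemma tt_iot (w : FreeGroup (Fin 2)) : tt * iot w = iot (endo w) * tt := by
  rw [← conj_iot]; group

lemma iot_pow (n : ℕ) : ∀ w : FreeGroup (Fin 2), ∃ w', iot w * (tt ^ n)⁻¹ = (tt ^ n)⁻¹ * iot w' := by
  induction n with
  | zero => intro w; exact ⟨w, by simp⟩
  | succ n ih =>
    intro w
    obtain ⟨w', h⟩ := ih (endo w)
    refine ⟨w', ?_⟩
    have e : iot w = tt⁻¹ * iot (endo w) * tt := by rw [← conj_iot]; group
    calc iot w * (tt ^ (n + 1))⁻¹ = tt⁻¹ * (iot (endo w) * (tt ^ n)⁻¹) := by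
          rw [e, pow_succ]; group
      _ = (tt ^ (n + 1))⁻¹ * iot w' := by rw [h, pow_succ]; group

lemma normal_form (g : HGroup) : ∃ (n m : ℕ) (w : FreeGroup (Fin 2)),
    g = (tt ^ n)⁻¹ * iot w * tt ^ m := by
  have hg : g ∈ Subgroup.closure (Set.range (PresentedGroup.of : Fin 3 → HGroup)) := by
    rw [PresentedGroup.closure_range_of]; trivial
  have ho : ∀ (v : FreeGroup (Fin 2)) (y : HGroup), (∃ (n m : ℕ) (w : FreeGroup (Fin 2)),
      y = (tt ^ n)⁻¹ * iot w * tt ^ m) → ∃ (n m : ℕ) (w : FreeGroup (Fin 2)),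
      iot v * y = (tt ^ n)⁻¹ * iot w * tt ^ m := by
    rintro v y ⟨n, m, w, rfl⟩
    obtain ⟨v', h⟩ := iot_pow n v
    refine ⟨n, m, v' * w, ?_⟩
    rw [map_mul, ← mul_assoc, ← mul_assoc, h]
    group
  have ea : iot (FreeGroup.of 0) = PresentedGroup.of 0 := by simp [iot]
  have eb : iot (FreeGroup.of 1) = PresentedGroup.of 1 := by simp [iot]
  induction hg using Subgroup.closure_induction_left with
  | one => exact ⟨0, 0, 1, by simp⟩
  | mul_left s hs y _ ih =>
    obtain ⟨i, rfl⟩ := hs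
    fin_cases i
    · have := ho (FreeGroup.of 0) y ih
      rwa [ea] at this
    · have := ho (FreeGroup.of 1) y ih
      rwa [eb] at this
    · obtain ⟨n, m, w, rfl⟩ := ih
      change ∃ (n' m' : ℕ) (w' : FreeGroup (Fin 2)),
        tt * ((tt ^ n)⁻¹ * iot w * tt ^ m) = (tt ^ n')⁻¹ * iot w' * tt ^ m'
      cases n with
      | zero =>
        refine ⟨0, m + 1, endo w, ?_⟩
        rw [pow_succ' tt m, ← mul_assoc _ tt, mul_assoc _ _ tt, ← tt_iot]
        simp [mul_assoc]
      | succ n =>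
        refine ⟨n, m, w, ?_⟩
        rw [pow_succ]
        group
  | inv_mul_cancel s hs y _ ih =>
    obtain ⟨i, rfl⟩ := hs
    fin_cases i
    · have := ho (FreeGroup.of 0)⁻¹ y ih
      rwa [map_inv, ea] at this
    · have := ho (FreeGroup.of 1)⁻¹ y ih
      rwa [map_inv, eb] at this
    · obtain ⟨n, m, w, rfl⟩ := ih
      change ∃ (n' m' : ℕ) (w' : FreeGroup (Fin 2)),
        tt⁻¹ * ((tt ^ n)⁻¹ * iot w * tt ^ m) = (tt ^ n')⁻¹ * iot w' * tt ^ m'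
      refine ⟨n + 1, m, w, ?_⟩
      rw [pow_succ]
      group

/-- The exponent sum of the stable letter modulo `5 ^ m`. -/
def expo (N : ℕ) : HGroup →* Multiplicative (ZMod N) :=
  PresentedGroup.toGroup (f := ![1, 1, Multiplicative.ofAdd 1]) (by
    intro r hr
    rcases hr with rfl | rfl <;> simp)

lemma expo_tt (N : ℕ) : expo N tt = Multiplicative.ofAdd 1 :=
  PresentedGroup.toGroup.of _

lemma expo_iot (N : ℕ) (w : FreeGroup (Fin 2)) : expo N (iot w) = 1 := by
  have : (expo N).comp iot = 1 := by
    apply FreeGroup.ext_hom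
    intro i
    fin_cases i
    · simp only [MonoidHom.comp_apply, iot, FreeGroup.lift_apply_of]
      exact PresentedGroup.toGroup.of _
    · simp only [MonoidHom.comp_apply, iot, FreeGroup.lift_apply_of]
      exact PresentedGroup.toGroup.of _
  exact DFunLike.congr_fun this w

/-- universal representation of the free group -/
def uni : FreeGroup (Fin 2) →*
    (TAlg RR (MvPolynomial.X 0) (MvPolynomial.X 1))ˣ :=
  FreeGroup.lift ![TAlg.ga _ _, TAlg.gb _ _]

def evZ : RR →+* ℤ := (MvPolynomial.aeval ![2, 11] : RR →ₐ[ℤ] ℤ).toRingHom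

lemma uni_ne (w : FreeGroup (Fin 2)) (hw : w ≠ 1) : (uni w : TAlg RR (MvPolynomial.X 0) (MvPolynomial.X 1)) ≠ 1 := by
  intro h
  apply hw
  apply sanov_injective
  rw [map_one]
  let sp := TAlg.spec (x := (MvPolynomial.X 0 : RR)) (z := MvPolynomial.X 1) evZ
    (by simp [evZ]) (by simp [evZ])
  have : (Units.map (sp : _ →* _)).comp uni =
      (Matrix.SpecialLinearGroup.toGL.comp (FreeGroup.lift sanov)) := by
    apply FreeGroup.ext_hom
    intro i
    ext a b
    fin_cases i
    · fin_cases a <;> fin_cases b <;>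
        simp [uni, sp, TAlg.spec, TAlg.ga, sanov, sanA_coe]
    · fin_cases a <;> fin_cases b <;>
        simp [uni, sp, TAlg.spec, TAlg.gb, sanov, sanB_coe]
  have h1 := congrArg Units.val (DFunLike.congr_fun this w)
  simp only [MonoidHom.comp_apply, Units.coe_map, h, map_one] at h1
  apply Subtype.ext
  exact h1.symm

lemma rho_iot (k : ℕ) (w : FreeGroup (Fin 2)) : ((rho k (iot w)).left : VK k) =
    TAlg.mapHom (Ideal.Quotient.mk (II ^ k)) rfl rfl (uni w : TAlg RR (MvPolynomial.X 0) (MvPolynomial.X 1)) := by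
  have : (rho k).comp iot = SemidirectProduct.inl.comp ((Units.map
      (TAlg.mapHom (Ideal.Quotient.mk (II ^ k)) rfl rfl :
        TAlg RR (MvPolynomial.X 0) (MvPolynomial.X 1) →+* VK k).toMonoidHom).comp uni) := by
    apply FreeGroup.ext_hom
    intro i
    fin_cases i
    · simp only [MonoidHom.comp_apply, iot, uni, FreeGroup.lift_apply_of]
      refine (rho_of k 0).trans ?_
      refine congrArg SemidirectProduct.inl (Units.ext ?_)
      ext <;> simp [TAlg.ga, TAlg.mapHom]
    · simp only [MonoidHom.comp_apply, iot, uni, FreeGroup.lift_apply_of]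
      refine (rho_of k 1).trans ?_
      refine congrArg SemidirectProduct.inl (Units.ext ?_)
      ext <;> simp [TAlg.gb, TAlg.mapHom]
  exact congrArg (fun q : Hol (VK k) => (q.left : VK k)) (DFunLike.congr_fun this w)

lemma rho_detect (w : FreeGroup (Fin 2)) (hw : w ≠ 1) : ∃ k, 2 ≤ k ∧ rho k (iot w) ≠ 1 := by
  have h := uni_ne w hw
  set U : TAlg RR (MvPolynomial.X 0) (MvPolynomial.X 1) := (uni w : TAlg RR (MvPolynomial.X 0) (MvPolynomial.X 1)) with hU
  have h' : U - 1 ≠ 0 := sub_ne_zero.mpr h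
  have key : ∀ k, rho k (iot w) = 1 → (U - 1).c0 ∈ II ^ k ∧ (U - 1).c1 ∈ II ^ k ∧
      (U - 1).c2 ∈ II ^ k ∧ (U - 1).c3 ∈ II ^ k := by
    intro k hk
    have e := rho_iot k w
    rw [hk, ← hU] at e
    have e' : (TAlg.mapHom (Ideal.Quotient.mk (II ^ k)) rfl rfl (U - 1) : VK k) = 0 := by
      rw [map_sub, ← e, map_one]; exact sub_self (1 : VK k)
    exact ⟨Ideal.Quotient.eq_zero_iff_mem.mp (congrArg TAlg.c0 e'),
      Ideal.Quotient.eq_zero_iff_mem.mp (congrArg TAlg.c1 e'),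
      Ideal.Quotient.eq_zero_iff_mem.mp (congrArg TAlg.c2 e'),
      Ideal.Quotient.eq_zero_iff_mem.mp (congrArg TAlg.c3 e')⟩
  by_contra hc
  push Not at hc
  apply h'
  ext1
  all_goals
    by_contra hne
    obtain ⟨k, hk, hm⟩ := RR_sep _ hne
    have := key k (hc k hk)
    tauto

/-- Passing to the image of a homomorphism. -/
lemma resid_of_hom {G Q : Type} [Group G] [Group Q] [Finite Q] (f : G →* Q) (g : G) (hg : f g ≠ 1)
    (hp : ∀ g, ∃ K, f g ^ 5 ^ K = 1) :
    ∃ (Q : Type) (_ : Group Q) (_ : Fintype Q) (f : G →* Q),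
    Function.Surjective f ∧ IsPGroup 5 Q ∧ f g ≠ 1 := by
  refine ⟨f.range, inferInstance, Fintype.ofFinite _, f.rangeRestrict, f.rangeRestrict_surjective,
    ?_, ?_⟩
  · rintro ⟨_, h, rfl⟩
    obtain ⟨K, hK⟩ := hp h
    exact ⟨K, Subtype.ext hK⟩
  · intro h
    exact hg (congrArg Subtype.val h)

end

/-- The group `H = ⟨a, b, t ∣ t a t⁻¹ = ab, t b t⁻¹ = ba⟩` has a finite index subgroup that is
residually (finite 5). -/
theorem hGroup_virtually_residually_five :
    ∃ H : Subgroup HGroup, H.FiniteIndex ∧ ResiduallyFiniteP 5 ↥H := by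
  refine ⟨(rho 2).ker, inferInstance, ?_⟩
  rintro ⟨g, hgk⟩ hg
  have hg1 : g ≠ 1 := fun h => hg (Subtype.ext h)
  obtain ⟨n, m, w, e⟩ := normal_form g
  by_cases hnm : n = m
  · subst hnm
    have hw : w ≠ 1 := by
      rintro rfl
      apply hg1
      rw [e]; simp
    obtain ⟨k, hk, hd⟩ := rho_detect w hw
    refine resid_of_hom ((rho k).comp (rho 2).ker.subtype) _ ?_ ?_
    · intro h
      apply hd
      have h2 : rho k g = 1 := h
      rw [e, map_mul, map_mul, map_inv] at h2
      have h3 := mul_eq_one_iff_eq_inv.mp h2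
      rw [inv_mul_eq_iff_eq_mul] at h3
      rw [h3, mul_inv_cancel]
    · rintro ⟨h, hh⟩
      exact rho_five k hk h hh
  · obtain ⟨N, hN⟩ : ∃ N : ℕ, n < 5 ^ N ∧ m < 5 ^ N :=
      ⟨n + m, lt_of_le_of_lt (Nat.le_add_right n m) (Nat.lt_pow_self (by norm_num)),
        lt_of_le_of_lt (Nat.le_add_left m n) (Nat.lt_pow_self (by norm_num))⟩
    have : NeZero (5 ^ N) := ⟨by positivity⟩
    have : Finite (Multiplicative (ZMod (5 ^ N))) := inferInstanceAs (Finite (ZMod (5 ^ N)))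
    refine resid_of_hom ((expo (5 ^ N)).comp (rho 2).ker.subtype) _ ?_ ?_
    · intro h
      apply hnm
      have h2 : expo (5 ^ N) g = 1 := h
      rw [e, map_mul, map_mul, map_inv, map_pow, map_pow, expo_iot, expo_tt, mul_one,
        inv_mul_eq_one, ← ofAdd_nsmul, ← ofAdd_nsmul] at h2
      have h3 := Multiplicative.ofAdd.injective h2
      rw [nsmul_one, nsmul_one, ZMod.natCast_eq_natCast_iff] at h3
      exact Nat.ModEq.eq_of_lt_of_lt h3 hN.1 hN.2
    · intro h
      refine ⟨N, ?_⟩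
      rw [← ofAdd_toAdd (((expo (5 ^ N)).comp (rho 2).ker.subtype) h), ← ofAdd_nsmul]
      rw [nsmul_eq_mul, ZMod.natCast_self, zero_mul]
      rfl
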